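/- Let G be a countable infinite residually finite group. Then G is amenable if and only if every Toeplitz G-subshift admits a G-invariant Borel probability measure. -/

import Mathlib

open MeasureTheory

/-- The shift action of `G` on `G → A`: `(g • y)(h) = y(g⁻¹h)`. -/
def shiftAct {G A : Type*} [Group G] (g : G) (y : G → A) : G → A :=
  fun h => y (g⁻¹ * h)

/-- A Toeplitz element: every coordinate is periodic with respect to some finite index
subgroup. -/
def IsToeplitz {G A : Type*} [Group G] (x : G → A) : Prop :=
  ∀ g : G, ∃ Γ : Subgroup G, Γ.FiniteIndex ∧ ∀ γ ∈ Γ, x (γ⁻¹ * g) = x g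

/-- The orbit closure of `x` under the shift action. -/
def orbitClosure {G A : Type*} [Group G] [TopologicalSpace A] (x : G → A) :
    Set (G → A) :=
  closure {y : G → A | ∃ g : G, y = shiftAct g x}

/-- Amenability of a countable group, characterized dynamically: every continuous action
on a nonempty compact metric space carries an invariant Borel probability measure. -/
def HasInvariantMeasuresAll (G : Type*) [Group G] : Prop :=
  ∀ (X : Type) [MetricSpace X] [CompactSpace X] [Nonempty X]
    [MeasurableSpace X] [BorelSpace X] (act : G → X → X),
    (∀ g : G, Continuous (act g)) → act 1 = id →
    (∀ g h : G, act (g * h) = act g ∘ act h) →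
    ∃ μ : Measure X, IsProbabilityMeasure μ ∧ ∀ g : G, Measure.map (act g) μ = μ

/-!
Suppose that `G` acts on `X` without invariant probability measure. By the Hahn–Banach and Riesz
theorems some finite sum `∑ k, (φ k - φ k ∘ k)` is at least `1` on `X`; along an orbit, this is a
bounded flow on a Cayley graph of `G` whose divergence is everywhere at least `1`, a certificate of
non-amenability.

The certificate can be made Toeplitz. By residual finiteness, any finite window of the flow can be
repeated periodically, with a cutoff that varies as slowly as desired. Stick breaking over windows
centered at all elements of `G` turns these periodic patterns into a convex combination: at each
element it involves finitely many windows only, hence is periodic there, and since the total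
variation of the weights across an edge is small, its divergence stays bounded below. Rounding the
flow to finitely many values gives a Toeplitz element of a full shift from which the divergence can
still be read off. Against an invariant measure on its orbit closure the divergence integrates to
zero, so there is no such measure.
-/

open Filter Set TopologicalSpace Topology Group
open scoped Pointwise

section InvariantMeasure

variable {X : Type*} [TopologicalSpace X] [CompactSpace X]

theorem exists_positive_linear_eq_zero_on_submodule (V : Submodule ℝ C(X, ℝ))
    (hV : ∀ v ∈ V, ∃ x, v x ≤ 0) :
    ∃ Λ : C(X, ℝ) →ₚ[ℝ] ℝ, Λ 1 = 1 ∧ ∀ v ∈ V, Λ v = 0 := by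
  have : Nonempty X := (hV 0 V.zero_mem).nonempty
  have hbdd (f : C(X, ℝ)) : BddAbove (range f) := (isCompact_range f.continuous).bddAbove
  obtain ⟨Λ, hΛV, hΛ⟩ := exists_extension_of_le_sublinear ⟨V, 0⟩ (fun f : C(X, ℝ) ↦ ⨆ x, f x)
    (fun c hc f ↦ (Real.mul_iSup_of_nonneg hc.le _).symm)
    (fun f g ↦ ciSup_le fun x ↦ add_le_add (le_ciSup (hbdd f) x) (le_ciSup (hbdd g) x))
    (by
      rintro ⟨v, hv⟩
      obtain ⟨x, hx⟩ := hV (-v) (V.neg_mem hv)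
      exact (neg_nonpos.1 hx).trans (le_ciSup (hbdd v) x))
  have hΛ_le {f : C(X, ℝ)} {a : ℝ} (hf : ∀ x, f x ≤ a) : Λ f ≤ a := (hΛ f).trans (ciSup_le hf)
  have hΛ_nonneg (f : C(X, ℝ)) (hf : 0 ≤ f) : 0 ≤ Λ f := by
    simpa using hΛ_le (f := -f) (a := 0) fun x ↦ neg_nonpos.2 (hf x)
  have hΛ_one : Λ 1 = 1 := by
    refine le_antisymm (hΛ_le fun _ ↦ le_rfl) ?_
    simpa using hΛ_le (f := -1) (a := -1) fun _ ↦ le_rfl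
  exact ⟨.mk₀ Λ hΛ_nonneg, hΛ_one, fun v hv ↦ hΛV ⟨v, hv⟩⟩

variable [T2Space X] [MeasurableSpace X] [BorelSpace X]

theorem exists_isProbabilityMeasure_integral_eq (Λ : C(X, ℝ) →ₚ[ℝ] ℝ) (hΛ : Λ 1 = 1) :
    ∃ μ : Measure X, IsProbabilityMeasure μ ∧ ∀ f : C(X, ℝ), ∫ x, f x ∂μ = Λ f := by
  let Λc : CompactlySupportedContinuousMap X ℝ →ₚ[ℝ] ℝ :=
    { toFun f := Λ f.toContinuousMap
      map_add' f g := map_add Λ f.toContinuousMap g.toContinuousMap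
      map_smul' c f := map_smul Λ c f.toContinuousMap
      monotone' _ _ hfg := OrderHomClass.mono Λ hfg }
  have hint (f : C(X, ℝ)) : ∫ x, f x ∂(RealRMK.rieszMeasure Λc) = Λ f :=
    RealRMK.integral_rieszMeasure Λc (.continuousMapEquiv f)
  refine ⟨RealRMK.rieszMeasure Λc, ?_, hint⟩
  rw [isProbabilityMeasure_iff_real]
  simpa [hΛ] using hint 1

theorem exists_one_le_sum_sub_comp [HasOuterApproxClosed X] {κ : Type*} (T : κ → C(X, X))
    (hT : ¬ ∃ μ : Measure X, IsProbabilityMeasure μ ∧ ∀ k, μ.map (T k) = μ) :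
    ∃ (S : Finset κ) (φ : κ → C(X, ℝ)), ∀ x, 1 ≤ ∑ k ∈ S, (φ k x - φ k (T k x)) := by
  let D : (κ →₀ C(X, ℝ)) →ₗ[ℝ] C(X, ℝ) := Finsupp.lsum ℝ fun k ↦
    LinearMap.id - (ContinuousMap.compRightAlgHom ℝ ℝ (T k)).toLinearMap
  obtain ⟨v, ⟨φ, rfl⟩, hpos⟩ : ∃ v ∈ LinearMap.range D, ∀ x, 0 < v x := by
    contrapose! hT
    obtain ⟨Λ, hΛ_one, hΛD⟩ := exists_positive_linear_eq_zero_on_submodule _ hT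
    obtain ⟨μ, hμ, hμΛ⟩ := exists_isProbabilityMeasure_integral_eq Λ hΛ_one
    refine ⟨μ, hμ, fun k ↦ ?_⟩
    have hTk : Measurable (T k) := (T k).continuous.measurable
    have := Measure.isProbabilityMeasure_map (μ := μ) hTk.aemeasurable
    refine ext_of_forall_integral_eq_of_IsFiniteMeasure fun f ↦ ?_
    have hΛf : Λ f.toContinuousMap = Λ (f.toContinuousMap.comp (T k)) := by
      rw [← sub_eq_zero, ← map_sub]
      exact hΛD _ ⟨Finsupp.single k f.toContinuousMap, by simp [D]⟩
    rw [integral_map hTk.aemeasurable f.continuous.aestronglyMeasurable]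
    exact (hμΛ (f.toContinuousMap.comp (T k))).trans (hΛf.symm.trans (hμΛ f.toContinuousMap).symm)
  obtain ⟨δ, hδ, hδv⟩ :=
    isCompact_univ.exists_forall_le' (ContinuousMap.continuous _).continuousOn fun x _ ↦ hpos x
  refine ⟨φ.support, fun k ↦ δ⁻¹ • φ k, fun x ↦ ?_⟩
  calc
    1 = δ⁻¹ * δ := (inv_mul_cancel₀ hδ.ne').symm
    _ ≤ δ⁻¹ * D φ x := by gcongr; exact hδv x (mem_univ x)
    _ = ∑ k ∈ φ.support, ((δ⁻¹ • φ k) x - (δ⁻¹ • φ k) (T k x)) := by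
      simp [D, Finsupp.sum, Finset.mul_sum, mul_sub, -Finset.sum_sub_distrib]

end InvariantMeasure

section Divergence

variable {G ι : Type*} [Group G] [Fintype ι]

/-- The net outflow at `g` of the flow on the right Cayley graph of `s` that carries the mass
`F h i` along the edge from `h` to `h * (s i)⁻¹`. -/
def divergence (s : ι → G) (F : G → ι → ℝ) (g : G) : ℝ :=
  ∑ i, (F g i - F (g * s i) i)

variable {s : ι → G} {F F' : G → ι → ℝ}

lemma divergence_sub (g : G) :
    divergence s (F - F') g = divergence s F g - divergence s F' g := by
  simp only [divergence, Pi.sub_apply, ← Finset.sum_sub_distrib]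
  exact Finset.sum_congr rfl fun i _ ↦ by ring

lemma abs_divergence_le {M : ℝ} (hF : ∀ g, ‖F g‖ ≤ M) (g : G) :
    |divergence s F g| ≤ Fintype.card ι * (2 * M) := by
  have hterm (i : ι) : |F g i - F (g * s i) i| ≤ 2 * M := by
    have h₁ := (norm_le_pi_norm (F g) i).trans (hF g)
    have h₂ := (norm_le_pi_norm (F (g * s i)) i).trans (hF (g * s i))
    have := (norm_sub_le (F g i) (F (g * s i) i)).trans (add_le_add h₁ h₂)
    rwa [← two_mul] at this
  calc
    _ ≤ ∑ i, |F g i - F (g * s i) i| := Finset.abs_sum_le_sum_abs _ _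
    _ ≤ Fintype.card ι • (2 * M) := Finset.sum_le_card_nsmul _ _ _ fun i _ ↦ hterm i
    _ = _ := nsmul_eq_mul _ _

lemma divergence_finsetSum {κ : Type*} (t : Finset κ) (F : κ → G → ι → ℝ) (g : G) :
    divergence s (fun h ↦ ∑ k ∈ t, F k h) g = ∑ k ∈ t, divergence s (F k) g := by
  simp only [divergence, Finset.sum_apply, ← Finset.sum_sub_distrib]
  exact Finset.sum_comm

/-- Only the edges along which the weight changes contribute to the error. -/
lemma le_divergence_smul {p : G → ℝ} {ρ : G → G} {c M : ℝ} {g : G} (hF : ∀ h, ‖F h‖ ≤ M)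
    (hc : ∀ h, c ≤ divergence s F h) (hp : 0 ≤ p g)
    (hρ : p g ≠ 0 → ∀ i, ρ (g * s i) = ρ g * s i) :
    c * p g - M * ∑ i, |p g - p (g * s i)| ≤ divergence s (fun h ↦ p h • F (ρ h)) g := by
  have hedge (i : ι) :
      p g * (F (ρ g) i - F (ρ g * s i) i) - M * |p g - p (g * s i)| ≤
        p g * F (ρ g) i - p (g * s i) * F (ρ (g * s i)) i := by
    have hshift : p g * F (ρ g * s i) i = p g * F (ρ (g * s i)) i := by
      by_cases h0 : p g = 0
      · simp only [h0, zero_mul]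
      · rw [hρ h0 i]
    have herr : |(p g - p (g * s i)) * F (ρ (g * s i)) i| ≤ M * |p g - p (g * s i)| := by
      rw [abs_mul, mul_comm]
      gcongr
      exact (norm_le_pi_norm (F (ρ (g * s i))) i).trans (hF _)
    linarith [neg_le_of_abs_le herr]
  calc
    _ ≤ p g * divergence s F (ρ g) - M * ∑ i, |p g - p (g * s i)| := by
      rw [mul_comm c]
      gcongr
      exact hc _
    _ = ∑ i, (p g * (F (ρ g) i - F (ρ g * s i) i) - M * |p g - p (g * s i)|) := by
      rw [Finset.sum_sub_distrib, divergence, Finset.mul_sum, Finset.mul_sum]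
    _ ≤ _ := Finset.sum_le_sum fun i _ ↦ hedge i

lemma le_divergence_sum_smul {κ : Type*} {t : Finset κ} {p : κ → G → ℝ} {ρ : κ → G → G} {c M : ℝ}
    {g : G} (hF : ∀ h, ‖F h‖ ≤ M) (hc : ∀ h, c ≤ divergence s F h) (hp : ∀ k ∈ t, 0 ≤ p k g)
    (hρ : ∀ k ∈ t, p k g ≠ 0 → ∀ i, ρ k (g * s i) = ρ k g * s i) :
    c * ∑ k ∈ t, p k g - M * ∑ i, ∑ k ∈ t, |p k g - p k (g * s i)| ≤
      divergence s (fun h ↦ ∑ k ∈ t, p k h • F (ρ k h)) g := by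
  rw [divergence_finsetSum, Finset.sum_comm, Finset.mul_sum, Finset.mul_sum,
    ← Finset.sum_sub_distrib]
  exact Finset.sum_le_sum fun k hk ↦ le_divergence_smul hF hc (hp k hk) (hρ k hk)

end Divergence

section Orbit

variable {G X : Type*} [Group G] [TopologicalSpace X] [CompactSpace X] [T2Space X]
  [HasOuterApproxClosed X] [Nonempty X] [MeasurableSpace X] [BorelSpace X]

/-- The flow is read off along an orbit from functions `φ k` with `∑ (φ k - φ k ∘ act k) ≥ 1`. -/
theorem exists_bounded_one_le_divergence {act : G → X → X} (hcont : ∀ g, Continuous (act g))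
    (hmul : ∀ g h, act (g * h) = act g ∘ act h)
    (hact : ¬ ∃ μ : Measure X, IsProbabilityMeasure μ ∧ ∀ g, μ.map (act g) = μ) :
    ∃ (S : Finset G) (s : S → G) (F : G → S → ℝ) (M : ℝ),
      (∀ g, ‖F g‖ ≤ M) ∧ ∀ g, 1 ≤ divergence s F g := by
  obtain ⟨S, φ, hφ⟩ := exists_one_le_sum_sub_comp (fun g ↦ ⟨act g, hcont g⟩) hact
  obtain ⟨x⟩ := ‹Nonempty X›
  refine ⟨S, fun k ↦ (k : G)⁻¹, fun g k ↦ φ k (act g⁻¹ x), ‖fun k : S ↦ φ k‖, fun g ↦ ?_,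
    fun g ↦ ?_⟩
  · exact (pi_norm_le_iff_of_nonneg (norm_nonneg _)).2 fun k ↦
      ((φ k).norm_coe_le_norm _).trans (norm_le_pi_norm (fun k : S ↦ φ k) k)
  · have h := hφ (act g⁻¹ x)
    rw [← Finset.sum_coe_sort] at h
    simpa only [divergence, mul_inv_rev, inv_inv, hmul, ContinuousMap.coe_mk,
      Function.comp_apply] using h

end Orbit

section StickBreaking

/-- Stick breaking: at step `n` a proportion `a n` of what remains of a stick of length `1` is
broken off, and `stickWeight a n` is the length of that piece. -/
def stickWeight (a : ℕ → ℝ) (n : ℕ) : ℝ :=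
  a n * ∏ k ∈ Finset.range n, (1 - a k)

variable {a b : ℕ → ℝ} {m n : ℕ}

lemma stickWeight_congr (hab : ∀ k ≤ n, a k = b k) : stickWeight a n = stickWeight b n :=
  congrArg₂ (· * ·) (hab n le_rfl) <|
    Finset.prod_congr rfl fun k hk ↦ by rw [hab k (Finset.mem_range.1 hk).le]

lemma stickWeight_nonneg (ha : ∀ k, a k ∈ Icc 0 1) (n : ℕ) : 0 ≤ stickWeight a n :=
  mul_nonneg (ha n).1 (Finset.prod_nonneg fun k _ ↦ sub_nonneg.2 (ha k).2)

lemma prod_one_sub_eq_zero (hm : a m = 1) (hmn : m < n) : ∏ k ∈ Finset.range n, (1 - a k) = 0 :=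
  Finset.prod_eq_zero (Finset.mem_range.2 hmn) (by rw [hm, sub_self])

lemma stickWeight_eq_zero (hm : a m = 1) (hmn : m < n) : stickWeight a n = 0 := by
  rw [stickWeight, prod_one_sub_eq_zero hm hmn, mul_zero]

lemma sum_stickWeight (a : ℕ → ℝ) (n : ℕ) :
    ∑ k ∈ Finset.range n, stickWeight a k = 1 - ∏ k ∈ Finset.range n, (1 - a k) := by
  induction n with
  | zero => simp
  | succ n ih =>
    rw [Finset.sum_range_succ, ih, Finset.prod_range_succ, stickWeight]
    ring

lemma sum_stickWeight_eq_one (hm : a m = 1) (hmn : m < n) :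
    ∑ k ∈ Finset.range n, stickWeight a k = 1 := by
  rw [sum_stickWeight, prod_one_sub_eq_zero hm hmn, sub_zero]

/-- The remaining length is kept on the left-hand side so that the induction closes. -/
lemma sum_abs_stickWeight_sub_add_le (ha : ∀ k, a k ∈ Icc 0 1) (hb : ∀ k, b k ∈ Icc 0 1) (n : ℕ) :
    ∑ k ∈ Finset.range n, |stickWeight a k - stickWeight b k| +
        |∏ k ∈ Finset.range n, (1 - a k) - ∏ k ∈ Finset.range n, (1 - b k)| ≤
      2 * ∑ k ∈ Finset.range n, |a k - b k| := by
  induction n with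
  | zero => simp
  | succ n ih =>
    simp only [Finset.sum_range_succ, Finset.prod_range_succ, stickWeight] at ih ⊢
    set r := ∏ k ∈ Finset.range n, (1 - a k)
    set q := ∏ k ∈ Finset.range n, (1 - b k)
    have hq : |q| ≤ 1 := by
      rw [Finset.abs_prod]
      refine Finset.prod_le_one (fun _ _ ↦ abs_nonneg _) fun k _ ↦ ?_
      rw [abs_le]
      constructor <;> linarith [(hb k).1, (hb k).2]
    have hcross : |(a n - b n) * q| ≤ |a n - b n| := by
      rw [abs_mul]
      exact mul_le_of_le_one_right (abs_nonneg _) hq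
    have hpiece : |a n * r - b n * q| ≤ a n * |r - q| + |a n - b n| := by
      calc
        _ = |a n * (r - q) + (a n - b n) * q| := by ring_nf
        _ ≤ |a n * (r - q)| + |(a n - b n) * q| := abs_add_le _ _
        _ ≤ _ := by rw [abs_mul, abs_of_nonneg (ha n).1]; gcongr
    have hrest : |r * (1 - a n) - q * (1 - b n)| ≤ (1 - a n) * |r - q| + |a n - b n| := by
      calc
        _ = |(1 - a n) * (r - q) - (a n - b n) * q| := by ring_nf
        _ ≤ |(1 - a n) * (r - q)| + |(a n - b n) * q| := abs_sub _ _
        _ ≤ _ := by rw [abs_mul, abs_of_nonneg (sub_nonneg.2 (ha n).2)]; gcongr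
    linarith

end StickBreaking

section PeriodicChart

variable {G ι : Type*} [Group G]

/-- The closed `1`-neighbourhood of `A` in the right Cayley graph of `s`. -/
def cayleyNhd (s : ι → G) (A : Set G) : Set G :=
  A * insert 1 (range s ∪ (range s)⁻¹)

variable {s : ι → G} {A : Set G} {g : G}

lemma finite_cayleyNhd [Finite ι] (hA : A.Finite) : (cayleyNhd s A).Finite :=
  hA.mul (((finite_range s).union (finite_range s).inv).insert 1)

lemma mem_cayleyNhd_self (hg : g ∈ A) : g ∈ cayleyNhd s A :=
  mem_mul.2 ⟨g, hg, 1, mem_insert _ _, mul_one g⟩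

lemma mul_mem_cayleyNhd (hg : g ∈ A) (i : ι) : g * s i ∈ cayleyNhd s A :=
  mul_mem_mul hg (.inr (.inl (mem_range_self i)))

lemma mul_inv_mem_cayleyNhd (hg : g ∈ A) (i : ι) : g * (s i)⁻¹ ∈ cayleyNhd s A :=
  mul_mem_mul hg (.inr (.inr (inv_mem_inv.2 (mem_range_self i))))

lemma mem_cayleyNhd_of_mul_mem {i : ι} (hg : g * s i ∈ A) : g ∈ cayleyNhd s A := by
  simpa only [mul_inv_cancel_right] using mul_inv_mem_cayleyNhd (s := s) hg i

lemma exists_finite_support_slow_count [Finite ι] (s : ι → G) (w : G) (L : ℕ) :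
    ∃ N : G → ℕ, N.support.Finite ∧ N w = L ∧ (∀ g, N g ≤ L) ∧
      ∀ g i, N g ≤ N (g * s i) + 1 ∧ N (g * s i) ≤ N g + 1 := by
  classical
  induction L with
  | zero => exact ⟨0, by simp, rfl, fun _ ↦ le_rfl, by simp⟩
  | succ L ih =>
    obtain ⟨N, hfin, hw, hle, hslow⟩ := ih
    let A := cayleyNhd s (insert w N.support)
    have hA : A.Finite := finite_cayleyNhd (hfin.insert w)
    have hN {g : G} (hg : N g ≠ 0) : g ∈ insert w N.support := mem_insert_of_mem w hg
    have hNA {g : G} (hg : g ∉ A) : N g = 0 := by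
      by_contra h
      exact hg (mem_cayleyNhd_self (hN h))
    have hNA_mul {g : G} {i : ι} (hg : g * s i ∉ A) : N g = 0 := by
      by_contra h
      exact hg (mul_mem_cayleyNhd (hN h) i)
    have hNA_of_mul {g : G} {i : ι} (hg : g ∉ A) : N (g * s i) = 0 := by
      by_contra h
      exact hg (mem_cayleyNhd_of_mul_mem (hN h))
    refine ⟨fun g ↦ if g ∈ A then N g + 1 else 0, hA.subset fun g ↦ ?_, ?_, fun g ↦ ?_,
      fun g i ↦ ?_⟩
    · exact fun hg ↦ by_contra fun h ↦ hg (if_neg h)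
    · exact (if_pos (mem_cayleyNhd_self (mem_insert w _))).trans (congrArg (· + 1) hw)
    · grind
    · have := hslow g i
      grind

lemma exists_finite_support_slow_bump [Finite ι] (s : ι → G) (w : G) {η : ℝ} (hη : 0 < η) :
    ∃ ψ : G → ℝ, ψ.support.Finite ∧ ψ w = 1 ∧ (∀ g, ψ g ∈ Icc 0 1) ∧
      ∀ g i, |ψ g - ψ (g * s i)| ≤ η := by
  obtain ⟨n, hn⟩ := exists_nat_one_div_lt hη
  obtain ⟨N, hfin, hw, hle, hslow⟩ := exists_finite_support_slow_count s w (n + 1)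
  have hpos : (0 : ℝ) < n + 1 := by positivity
  refine ⟨fun g ↦ N g / (n + 1), hfin.subset fun g hg h ↦ hg (by simp [h]), ?_, fun g ↦ ⟨?_, ?_⟩,
    fun g i ↦ ?_⟩
  · simp only [hw, Nat.cast_succ, div_self hpos.ne']
  · positivity
  · rw [div_le_one hpos]
    exact_mod_cast hle g
  · have hNg : |(N g : ℝ) - N (g * s i)| ≤ 1 := by
      rw [abs_sub_le_iff, sub_le_iff_le_add', sub_le_iff_le_add']
      exact_mod_cast hslow g i
    rw [← sub_div, abs_div, abs_of_pos hpos]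
    exact (div_le_div_of_nonneg_right hNg hpos.le).trans hn.le

lemma exists_finiteIndex_injOn_rightRel [ResiduallyFinite G] {T : Set G} (hT : T.Finite) :
    ∃ Γ : Subgroup G, Γ.FiniteIndex ∧
      InjOn (Quotient.mk (QuotientGroup.rightRel Γ)) T := by
  have hsep (g : G) : ∃ H : Subgroup G, H.FiniteIndex ∧ (g ∈ H → g = 1) := by
    by_cases hg : g = 1
    · exact ⟨⊤, inferInstance, fun _ ↦ hg⟩
    · obtain ⟨H, hH, hgH⟩ := residuallyFinite_iff_exists_finiteIndex.1 ‹_› g hg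
      exact ⟨H, hH, fun h ↦ absurd h hgH⟩
  choose H hfin hH using hsep
  have := (hT.mul hT.inv).to_subtype
  refine ⟨⨅ d : ↥(T * T⁻¹), H d, Subgroup.finiteIndex_iInf fun d ↦ hfin d, fun a ha b hb hab ↦ ?_⟩
  have hmem := QuotientGroup.rightRel_apply.1 (Quotient.exact hab)
  have hd : b * a⁻¹ ∈ T * T⁻¹ := mul_mem_mul hb (inv_mem_inv.2 ha)
  exact (mul_inv_eq_one.1 (hH _ (Subgroup.mem_iInf.1 hmem ⟨_, hd⟩))).symm

lemma exists_section_of_injOn {α β : Type*} [Nonempty α] {f : α → β} {T : Set α}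
    (hf : InjOn f T) :
    ∃ ρ : α → α, (∀ a, f (ρ a) = f a) ∧ (∀ a b, f a = f b → ρ a = ρ b) ∧ ∀ t ∈ T, ρ t = t := by
  obtain ⟨S, hTS, hS⟩ := hf.bijOn_image.exists_extend (image_subset_range f T) Subset.rfl
  exact ⟨fun a ↦ Function.invFunOn f S (f a), fun a ↦ hS.invOn_invFunOn.2 (mem_range_self a),
    fun a b hab ↦ congrArg (Function.invFunOn f S) hab, fun t ht ↦ hS.invOn_invFunOn.1 (hTS ht)⟩

lemma exists_finiteIndex_periodic_rep [ResiduallyFinite G] {T : Set G} (hT : T.Finite) :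
    ∃ (Γ : Subgroup G) (ρ : G → G), Γ.FiniteIndex ∧ (∀ γ ∈ Γ, ∀ g, ρ (γ * g) = ρ g) ∧
      (∀ t ∈ T, ρ t = t) ∧ ∀ g u, ρ g * u ∈ T → ρ (g * u) = ρ g * u := by
  obtain ⟨Γ, hΓ, hinj⟩ := exists_finiteIndex_injOn_rightRel hT
  obtain ⟨ρ, hρ, hρ_eq, hρT⟩ := exists_section_of_injOn hinj
  have hρ_rel {a b : G} (hab : b * a⁻¹ ∈ Γ) : ρ a = ρ b :=
    hρ_eq a b (Quotient.sound (QuotientGroup.rightRel_apply.2 hab))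
  refine ⟨Γ, ρ, hΓ, fun γ hγ g ↦ (hρ_rel ?_).symm, hρT, fun g u hu ↦ ?_⟩
  · rwa [mul_inv_cancel_right]
  · rw [← hρT _ hu]
    refine hρ_rel ?_
    rw [mul_inv_rev, mul_assoc, mul_inv_cancel_left]
    exact QuotientGroup.rightRel_apply.1 (Quotient.exact (hρ g).symm)

/-- A finite window of the group around `w`, repeated periodically: a slowly varying bump `weight`
and a map `rep` sending each element to its representative, both invariant under the finite index
subgroup `period`, such that `rep` preserves the edges of the Cayley graph of `s` starting where the
bump does not vanish. -/
structure PeriodicChart (s : ι → G) (η : ℝ) (w : G) where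
  period : Subgroup G
  finiteIndex_period : period.FiniteIndex
  weight : G → ℝ
  rep : G → G
  weight_mul {γ : G} (hγ : γ ∈ period) (g : G) : weight (γ * g) = weight g
  rep_mul {γ : G} (hγ : γ ∈ period) (g : G) : rep (γ * g) = rep g
  weight_mem_Icc (g : G) : weight g ∈ Icc 0 1
  weight_center : weight w = 1
  abs_weight_sub_le (g : G) (i : ι) : |weight g - weight (g * s i)| ≤ η
  rep_mul_of_weight_ne_zero {g : G} (hg : weight g ≠ 0) (i : ι) : rep (g * s i) = rep g * s i

lemma nonempty_periodicChart [ResiduallyFinite G] [Finite ι] (s : ι → G) (w : G) {η : ℝ}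
    (hη : 0 < η) : Nonempty (PeriodicChart s η w) := by
  obtain ⟨ψ, hfin, hw, hψ, hslow⟩ := exists_finite_support_slow_bump s w hη
  obtain ⟨Γ, ρ, hΓ, hρΓ, hρ_id, hρ_mul⟩ :=
    exists_finiteIndex_periodic_rep (finite_cayleyNhd (s := s) hfin)
  have hρ_edge {g : G} {i : ι} (h : ψ (ρ g) ≠ 0 ∨ ψ (ρ (g * s i)) ≠ 0) :
      ρ (g * s i) = ρ g * s i := by
    obtain h | h := h
    · exact hρ_mul g (s i) (mul_mem_cayleyNhd h i)
    · have := hρ_mul (g * s i) (s i)⁻¹ (mul_inv_mem_cayleyNhd h i)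
      rw [mul_inv_cancel_right] at this
      exact eq_mul_of_mul_inv_eq this.symm
  exact ⟨
    { period := Γ
      finiteIndex_period := hΓ
      weight g := ψ (ρ g)
      rep := ρ
      weight_mul hγ g := congrArg ψ (hρΓ _ hγ g)
      rep_mul hγ g := hρΓ _ hγ g
      weight_mem_Icc g := hψ _
      weight_center := by rw [hρ_id w (mem_cayleyNhd_self (by simp [hw])), hw]
      abs_weight_sub_le g i := by
        by_cases h : ψ (ρ g) ≠ 0 ∨ ψ (ρ (g * s i)) ≠ 0
        · rw [hρ_edge h]
          exact hslow _ i
        · rw [not_or, not_not, not_not] at h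
          simp only [h, sub_zero, abs_zero, hη.le]
      rep_mul_of_weight_ne_zero h i := hρ_edge (.inl h) }⟩

end PeriodicChart

section Blend

variable {G ι : Type*} [Group G] {s : ι → G} {η : ℕ → ℝ} {e : ℕ → G}
  {V : Type*} [AddCommGroup V] [Module ℝ V]

/-- The partition of unity obtained by stick breaking from the bumps of a sequence of charts. Where
the `m`-th bump is `1`, all weights after the `m`-th vanish. -/
def patchWeight (C : ∀ n, PeriodicChart s (η n) (e n)) (n : ℕ) (g : G) : ℝ :=
  stickWeight (fun k ↦ (C k).weight g) n

/-- The average of the periodic patterns `F ∘ (C n).rep`, weighted by `patchWeight C n`. The `∑ᶠ`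
is a genuine finite sum wherever some bump is `1`. -/
noncomputable def blend (C : ∀ n, PeriodicChart s (η n) (e n)) (F : G → V) (g : G) : V :=
  ∑ᶠ n, patchWeight C n g • F ((C n).rep g)

variable {C : ∀ n, PeriodicChart s (η n) (e n)} {F : G → V} {g : G} {m N : ℕ}

lemma patchWeight_nonneg (n : ℕ) (g : G) : 0 ≤ patchWeight C n g :=
  stickWeight_nonneg (fun k ↦ (C k).weight_mem_Icc g) n

lemma weight_ne_zero_of_patchWeight_ne_zero {n : ℕ} (hn : patchWeight C n g ≠ 0) :
    (C n).weight g ≠ 0 :=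
  left_ne_zero_of_mul hn

lemma sum_patchWeight_eq_one (hm : (C m).weight g = 1) (hmN : m < N) :
    ∑ n ∈ Finset.range N, patchWeight C n g = 1 :=
  sum_stickWeight_eq_one hm hmN

lemma sum_abs_patchWeight_sub_le (g : G) (i : ι) (N : ℕ) :
    ∑ n ∈ Finset.range N, |patchWeight C n g - patchWeight C n (g * s i)| ≤
      2 * ∑ n ∈ Finset.range N, η n := by
  calc
    _ ≤ 2 * ∑ n ∈ Finset.range N, |(C n).weight g - (C n).weight (g * s i)| :=
      le_of_add_le_of_nonneg_left (sum_abs_stickWeight_sub_add_le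
        (fun n ↦ (C n).weight_mem_Icc g) (fun n ↦ (C n).weight_mem_Icc (g * s i)) N) (abs_nonneg _)
    _ ≤ _ := by
      gcongr
      exact (C _).abs_weight_sub_le g i

lemma blend_eq_sum (hm : (C m).weight g = 1) (hmN : m < N) :
    blend C F g = ∑ n ∈ Finset.range N, patchWeight C n g • F ((C n).rep g) := by
  refine finsum_eq_sum_of_support_subset _ fun n hn ↦ ?_
  by_contra hnN
  have hmn : m < n := hmN.trans_le (by simpa using hnN)
  have h0 : patchWeight C n g = 0 := stickWeight_eq_zero hm hmn
  exact hn (by simp only [h0, zero_smul])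

lemma exists_weight_eq_one (he : e.Surjective) (g : G) : ∃ m, (C m).weight g = 1 := by
  obtain ⟨m, rfl⟩ := he g
  exact ⟨m, (C m).weight_center⟩

lemma isToeplitz_blend (he : e.Surjective) : IsToeplitz (blend C F) := by
  intro g
  obtain ⟨m, hm⟩ := exists_weight_eq_one (C := C) he g
  refine ⟨⨅ n ∈ Finset.range (m + 1), (C n).period,
    Subgroup.finiteIndex_iInf' _ fun n _ ↦ (C n).finiteIndex_period, fun γ hγ ↦ ?_⟩
  have hperiod {n : ℕ} (hn : n < m + 1) : γ⁻¹ ∈ (C n).period :=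
    inv_mem (Subgroup.mem_iInf.1 (Subgroup.mem_iInf.1 hγ n) (Finset.mem_range.2 hn))
  have hm' : (C m).weight (γ⁻¹ * g) = 1 := ((C m).weight_mul (hperiod m.lt_succ_self) g).trans hm
  rw [blend_eq_sum hm m.lt_succ_self, blend_eq_sum hm' m.lt_succ_self]
  refine Finset.sum_congr rfl fun n hn ↦ ?_
  rw [Finset.mem_range] at hn
  have hpatch : patchWeight C n (γ⁻¹ * g) = patchWeight C n g :=
    stickWeight_congr fun k hk ↦ (C k).weight_mul (hperiod (hk.trans_lt hn)) g
  rw [hpatch, (C n).rep_mul (hperiod hn)]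

lemma blend_mem {K : Set V} (hK : Convex ℝ K) (hF : ∀ g, F g ∈ K) (he : e.Surjective) (g : G) :
    blend C F g ∈ K := by
  obtain ⟨m, hm⟩ := exists_weight_eq_one (C := C) he g
  rw [blend_eq_sum hm m.lt_succ_self]
  exact hK.sum_mem (fun n _ ↦ patchWeight_nonneg n g)
    (sum_patchWeight_eq_one hm m.lt_succ_self) fun n _ ↦ hF _

lemma le_divergence_blend [Fintype ι] {F : G → ι → ℝ} {c M δ : ℝ} (hF : ∀ g, ‖F g‖ ≤ M)
    (hc : ∀ g, c ≤ divergence s F g) (hη : ∀ N, ∑ n ∈ Finset.range N, η n ≤ δ)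
    (he : e.Surjective) (g : G) :
    c - M * (Fintype.card ι * (2 * δ)) ≤ divergence s (blend C F) g := by
  have hev (h : G) : ∀ᶠ N in atTop, ∃ m < N, (C m).weight h = 1 := by
    obtain ⟨m, hm⟩ := exists_weight_eq_one (C := C) he h
    exact (eventually_gt_atTop m).mono fun N hN ↦ ⟨m, hN, hm⟩
  obtain ⟨N, ⟨m, hmN, hm⟩, hN⟩ := ((hev g).and (eventually_all.2 fun i ↦ hev (g * s i))).exists
  have hM : 0 ≤ M := (norm_nonneg _).trans (hF g)
  have hblend (i : ι) : blend C F (g * s i) =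
      ∑ n ∈ Finset.range N, patchWeight C n (g * s i) • F ((C n).rep (g * s i)) := by
    obtain ⟨k, hkN, hk⟩ := hN i
    exact blend_eq_sum hk hkN
  have herr : ∑ i, ∑ n ∈ Finset.range N, |patchWeight C n g - patchWeight C n (g * s i)| ≤
      Fintype.card ι * (2 * δ) := by
    calc
      _ ≤ ∑ _ : ι, 2 * δ := by
        gcongr with i
        exact (sum_abs_patchWeight_sub_le g i N).trans (by gcongr; exact hη N)
      _ = _ := by rw [Finset.sum_const, Finset.card_univ, nsmul_eq_mul]
  calc
    _ ≤ c * ∑ n ∈ Finset.range N, patchWeight C n g -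
        M * ∑ i, ∑ n ∈ Finset.range N, |patchWeight C n g - patchWeight C n (g * s i)| := by
      rw [sum_patchWeight_eq_one hm hmN, mul_one]
      gcongr
    _ ≤ divergence s
        (fun h ↦ ∑ n ∈ Finset.range N, patchWeight C n h • F ((C n).rep h)) g :=
      le_divergence_sum_smul hF hc (fun n _ ↦ patchWeight_nonneg n g) fun n _ hn ↦
        (C n).rep_mul_of_weight_ne_zero (weight_ne_zero_of_patchWeight_ne_zero hn)
    _ = _ := by simp only [divergence, blend_eq_sum hm hmN, hblend]

theorem exists_isToeplitz_le_divergence [ResiduallyFinite G] [Countable G] [Fintype ι] (s : ι → G)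
    {F : G → ι → ℝ} {c c' M : ℝ} (hF : ∀ g, ‖F g‖ ≤ M) (hc : ∀ g, c ≤ divergence s F g)
    (hc' : c' < c) :
    ∃ E : G → ι → ℝ, IsToeplitz E ∧ (∀ g, ‖E g‖ ≤ M) ∧ ∀ g, c' ≤ divergence s E g := by
  obtain ⟨δ, hδ, hδc⟩ : ∃ δ > 0, M * (Fintype.card ι * (2 * δ)) ≤ c - c' := by
    obtain ⟨δ, hδ, h⟩ := exists_pos_mul_lt (sub_pos.2 hc') (M * (Fintype.card ι * 2))
    exact ⟨δ, hδ, by linarith⟩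
  obtain ⟨η, hη, a, hηa, haδ⟩ := posSumOfEncodable hδ ℕ
  obtain ⟨e, he⟩ := exists_surjective_nat G
  have C (n : ℕ) : PeriodicChart s (η n) (e n) := (nonempty_periodicChart s (e n) (hη n)).some
  refine ⟨blend C F, isToeplitz_blend he, fun g ↦ ?_, fun g ↦ ?_⟩
  · rw [← mem_closedBall_zero_iff]
    exact blend_mem (convex_closedBall 0 M) (fun g ↦ mem_closedBall_zero_iff.2 (hF g)) he g
  · have hsum (N : ℕ) : ∑ n ∈ Finset.range N, η n ≤ δ :=
      (sum_le_hasSum _ (fun n _ ↦ (hη n).le) hηa).trans haδ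
    linarith [le_divergence_blend (C := C) hF hc hsum he g]

end Blend

section Rounding

lemma exists_fin_code_of_totallyBounded {V : Type*} [PseudoMetricSpace V] [Nonempty V] {K : Set V}
    (hK : TotallyBounded K) {ε : ℝ} (hε : 0 < ε) :
    ∃ (m : ℕ) (code : V → Fin (m + 2)) (decode : Fin (m + 2) → V),
      ∀ v ∈ K, dist (decode (code v)) v ≤ ε := by
  obtain ⟨t, ht, hKt⟩ := Metric.totallyBounded_iff.1 hK ε hε
  obtain ⟨m, f, -, rfl⟩ := ht.fin_param
  obtain ⟨v₀⟩ := ‹Nonempty V›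
  have hcode (v : V) : ∃ k, v ∈ K → dist (Fin.append f (fun _ : Fin 2 ↦ v₀) k) v ≤ ε := by
    by_cases hv : v ∈ K
    · obtain ⟨_, ⟨k, rfl⟩, hk⟩ := mem_iUnion₂.1 (hKt hv)
      refine ⟨k.castAdd 2, fun _ ↦ ?_⟩
      rw [Fin.append_left, dist_comm]
      exact (Metric.mem_ball.1 hk).le
    · exact ⟨Fin.natAdd m 0, fun h ↦ absurd h hv⟩
  choose code h_code using hcode
  exact ⟨m, code, _, h_code⟩

variable {G ι A B : Type*} [Group G]

lemma IsToeplitz.comp {x : G → A} (hx : IsToeplitz x) (f : A → B) : IsToeplitz (f ∘ x) := by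
  intro g
  obtain ⟨Γ, hΓ, hper⟩ := hx g
  exact ⟨Γ, hΓ, fun γ hγ ↦ congrArg f (hper γ hγ)⟩

theorem IsToeplitz.exists_fin_le_divergence [Fintype ι] {s : ι → G} {E : G → ι → ℝ}
    {c c' M : ℝ} (hE : IsToeplitz E) (hM : ∀ g, ‖E g‖ ≤ M) (hc : ∀ g, c ≤ divergence s E g)
    (hc' : c' < c) :
    ∃ (m : ℕ) (x : G → Fin (m + 2)) (d : Fin (m + 2) → ι → ℝ),
      IsToeplitz x ∧ ∀ g, c' ≤ divergence s (d ∘ x) g := by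
  obtain ⟨ε, hε, hεc⟩ : ∃ ε > 0, Fintype.card ι * (2 * ε) ≤ c - c' := by
    obtain ⟨ε, hε, h⟩ := exists_pos_mul_lt (sub_pos.2 hc') (Fintype.card ι * 2)
    exact ⟨ε, hε, by linarith⟩
  obtain ⟨m, code, decode, hdecode⟩ :=
    exists_fin_code_of_totallyBounded (isCompact_closedBall (0 : ι → ℝ) M).totallyBounded hε
  refine ⟨m, code ∘ E, decode, hE.comp code, fun g ↦ ?_⟩
  have hclose (h : G) : ‖(E - decode ∘ code ∘ E) h‖ ≤ ε := by
    rw [Pi.sub_apply, ← dist_eq_norm, dist_comm]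
    exact hdecode _ (mem_closedBall_zero_iff.2 (hM h))
  have hdiv := le_of_abs_le (abs_divergence_le (s := s) hclose g)
  rw [divergence_sub] at hdiv
  linarith [hc g]

end Rounding


section Shift

variable {G A ι : Type*} [Group G]

lemma shiftAct_one : shiftAct (1 : G) = (id : (G → A) → G → A) := by
  ext y g
  simp only [shiftAct, inv_one, one_mul, id]

lemma shiftAct_mul (g h : G) : shiftAct (g * h) = shiftAct (A := A) g ∘ shiftAct h := by
  ext y k
  simp only [shiftAct, Function.comp_apply, mul_inv_rev, mul_assoc]

lemma measurable_shiftAct [MeasurableSpace A] (g : G) : Measurable (shiftAct (A := A) g) :=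
  measurable_pi_lambda _ fun _ ↦ measurable_pi_apply _

lemma divergence_comp_shiftAct [Fintype ι] (s : ι → G) (d : A → ι → ℝ) (x : G → A) (g h : G) :
    divergence s (d ∘ shiftAct g x) h = divergence s (d ∘ x) (g⁻¹ * h) := by
  simp only [divergence, Function.comp_apply, shiftAct, mul_assoc]

lemma integral_comp_eval [MeasurableSpace A] {f : A → ℝ} (hf : Measurable f) {μ : Measure (G → A)}
    (hμ : ∀ g, μ.map (shiftAct g) = μ) (g : G) : ∫ y, f (y g) ∂μ = ∫ y, f (y 1) ∂μ := by
  calc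
    ∫ y, f (y g) ∂μ = ∫ y, f (shiftAct g⁻¹ y 1) ∂μ := by simp only [shiftAct, inv_inv, mul_one]
    _ = ∫ y, f (y 1) ∂μ.map (shiftAct g⁻¹) :=
      (integral_map (measurable_shiftAct _).aemeasurable
        (hf.comp (measurable_pi_apply 1)).aestronglyMeasurable).symm
    _ = ∫ y, f (y 1) ∂μ := by rw [hμ]

variable [TopologicalSpace A]

lemma continuous_shiftAct (g : G) : Continuous (shiftAct (A := A) g) :=
  continuous_pi fun _ ↦ continuous_apply _

lemma isClosed_orbitClosure (x : G → A) : IsClosed (orbitClosure x) := isClosed_closure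

lemma mem_orbitClosure_self (x : G → A) : x ∈ orbitClosure x :=
  subset_closure ⟨1, by rw [shiftAct_one, id]⟩

lemma mapsTo_shiftAct_orbitClosure (g : G) (x : G → A) :
    MapsTo (shiftAct g) (orbitClosure x) (orbitClosure x) := by
  refine MapsTo.closure ?_ (continuous_shiftAct g)
  rintro _ ⟨h, rfl⟩
  exact ⟨g * h, by rw [shiftAct_mul, Function.comp_apply]⟩

lemma continuous_divergence_comp [Fintype ι] {d : A → ι → ℝ} (hd : Continuous d) (s : ι → G)
    (g : G) : Continuous fun y : G → A ↦ divergence s (d ∘ y) g := by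
  unfold divergence
  fun_prop

lemma le_divergence_of_mem_orbitClosure [Fintype ι] {d : A → ι → ℝ} (hd : Continuous d)
    {s : ι → G} {x : G → A} {c : ℝ} (hx : ∀ g, c ≤ divergence s (d ∘ x) g) {y : G → A}
    (hy : y ∈ orbitClosure x) (g : G) : c ≤ divergence s (d ∘ y) g := by
  refine closure_minimal ?_ (isClosed_le continuous_const (continuous_divergence_comp hd s g)) hy
  rintro _ ⟨h, rfl⟩
  exact (hx _).trans_eq (divergence_comp_shiftAct s d x h g).symm

variable [CompactSpace A] [MeasurableSpace A] [OpensMeasurableSpace A]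

lemma integrable_comp_eval {J : Type*} {f : A → ℝ} (hf : Continuous f) (μ : Measure (J → A))
    [IsFiniteMeasure μ] (j : J) : Integrable (fun y ↦ f (y j)) μ := by
  obtain ⟨M, hM⟩ := isCompact_univ.exists_bound_of_continuousOn hf.continuousOn
  exact .of_bound (hf.measurable.comp (measurable_pi_apply j)).aestronglyMeasurable M
    (.of_forall fun y ↦ hM (y j) (mem_univ _))

variable [Fintype ι] {d : A → ι → ℝ} {μ : Measure (G → A)}

lemma integrable_divergence_comp [IsFiniteMeasure μ] (hd : Continuous d) (s : ι → G) (g : G) :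
    Integrable (fun y ↦ divergence s (d ∘ y) g) μ := by
  have hint (h : G) (i : ι) : Integrable (fun y ↦ d (y h) i) μ :=
    integrable_comp_eval ((continuous_apply i).comp hd) μ h
  exact integrable_finsetSum _ fun i _ ↦ (hint g i).sub (hint (g * s i) i)

lemma integral_divergence_eq_zero [IsFiniteMeasure μ] (hd : Continuous d) (s : ι → G)
    (hμ : ∀ g, μ.map (shiftAct g) = μ) (g : G) : ∫ y, divergence s (d ∘ y) g ∂μ = 0 := by
  have hdi (i : ι) : Continuous fun a ↦ d a i := (continuous_apply i).comp hd
  have hint (h : G) (i : ι) : Integrable (fun y ↦ d (y h) i) μ := integrable_comp_eval (hdi i) μ h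
  calc
    _ = ∑ i, ∫ y, (d (y g) i - d (y (g * s i)) i) ∂μ :=
      integral_finsetSum _ fun i _ ↦ (hint g i).sub (hint (g * s i) i)
    _ = ∑ i, (∫ y, d (y g) i ∂μ - ∫ y, d (y (g * s i)) i ∂μ) := by
      congr! 1 with i
      exact integral_sub (hint g i) (hint (g * s i) i)
    _ = 0 := by
      simp only [integral_comp_eval (hdi _).measurable hμ, sub_self, Finset.sum_const_zero]

theorem nonpos_of_le_divergence [IsProbabilityMeasure μ] (hd : Continuous d) {s : ι → G}
    {x : G → A} {c : ℝ} (hx : ∀ g, c ≤ divergence s (d ∘ x) g) (hμx : μ (orbitClosure x) = 1)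
    (hμ : ∀ g, μ.map (shiftAct g) = μ) : c ≤ 0 := by
  have hint : Integrable (fun y ↦ divergence s (d ∘ y) 1) μ := integrable_divergence_comp hd s 1
  have hsub : orbitClosure x ⊆ {y | c ≤ divergence s (d ∘ y) 1} := fun y hy ↦
    le_divergence_of_mem_orbitClosure hd hx hy 1
  have hae : ∀ᵐ y ∂μ, c ≤ divergence s (d ∘ y) 1 :=
    (mem_ae_iff_prob_eq_one₀ (nullMeasurableSet_le aemeasurable_const hint.aemeasurable)).2
      (le_antisymm prob_le_one (hμx ▸ measure_mono hsub))
  calc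
    c = ∫ _, c ∂μ := by rw [integral_const, probReal_univ, one_smul]
    _ ≤ ∫ y, divergence s (d ∘ y) 1 ∂μ := integral_mono_ae (integrable_const c) hint hae
    _ = 0 := integral_divergence_eq_zero hd s hμ 1

end Shift

section Forward

theorem HasInvariantMeasuresAll.exists_isProbabilityMeasure {G : Type*} [Group G]
    (hG : HasInvariantMeasuresAll G) {X : Type*} [TopologicalSpace X] [CompactSpace X] [T2Space X]
    [SecondCountableTopology X] [Nonempty X] [MeasurableSpace X] [BorelSpace X] {act : G → X → X}
    (hcont : ∀ g, Continuous (act g)) (hone : act 1 = id)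
    (hmul : ∀ g h, act (g * h) = act g ∘ act h) :
    ∃ μ : Measure X, IsProbabilityMeasure μ ∧ ∀ g, μ.map (act g) = μ := by
  have : Small.{0} X := by
    obtain ⟨f, hf⟩ := exists_embedding_l_infty X
    exact small_of_injective hf.injective
  let e : Shrink.{0} X ≃ₜ X := (Shrink.homeomorph X).symm
  have := e.symm.compactSpace
  have := e.symm.t2Space
  have := e.secondCountableTopology
  have : Nonempty (Shrink.{0} X) := e.surjective.nonempty
  let := metrizableSpaceMetric (Shrink.{0} X)
  borelize (Shrink.{0} X)
  obtain ⟨ν, hν, hinv⟩ := hG (Shrink.{0} X) (fun g ↦ e.symm ∘ act g ∘ e)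
    (fun g ↦ e.symm.continuous.comp ((hcont g).comp e.continuous))
    (by ext; simp [hone]) (fun g h ↦ by ext; simp [hmul])
  have he : Measurable e := e.continuous.measurable
  refine ⟨ν.map e, Measure.isProbabilityMeasure_map he.aemeasurable, fun g ↦ ?_⟩
  have hact : Measurable (act g) := (hcont g).measurable
  conv_rhs => rw [← hinv g]
  rw [Measure.map_map hact he,
    Measure.map_map he (e.symm.continuous.measurable.comp (hact.comp he))]
  congr 1
  ext
  simp

theorem HasInvariantMeasuresAll.exists_measure_orbitClosure {G A : Type*} [Group G] [Countable G]
    (hG : HasInvariantMeasuresAll G) [TopologicalSpace A] [CompactSpace A] [T2Space A]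
    [SecondCountableTopology A] [MeasurableSpace A] [BorelSpace A] (x : G → A) :
    ∃ μ : Measure (G → A), IsProbabilityMeasure μ ∧ μ (orbitClosure x) = 1 ∧
      ∀ g, μ.map (shiftAct g) = μ := by
  have hclosed := isClosed_orbitClosure x
  have : CompactSpace (orbitClosure x) := isCompact_iff_compactSpace.1 hclosed.isCompact
  have : Nonempty (orbitClosure x) := ⟨x, mem_orbitClosure_self x⟩
  let act (g : G) : orbitClosure x → orbitClosure x := (mapsTo_shiftAct_orbitClosure g x).restrict
  have hact (g : G) : Continuous (act g) := (continuous_shiftAct g).restrict _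
  obtain ⟨ν, hν, hinv⟩ := hG.exists_isProbabilityMeasure hact
    (by ext1 y; exact Subtype.ext (congrFun shiftAct_one y.1))
    (fun g h ↦ by ext1 y; exact Subtype.ext (congrFun (shiftAct_mul g h) y.1))
  have hval : Measurable (Subtype.val : orbitClosure x → G → A) := measurable_subtype_coe
  refine ⟨ν.map Subtype.val, Measure.isProbabilityMeasure_map hval.aemeasurable, ?_, fun g ↦ ?_⟩
  · rw [Measure.map_apply hval hclosed.measurableSet, Subtype.coe_preimage_self, measure_univ]
  · conv_rhs => rw [← hinv g]
    rw [Measure.map_map (measurable_shiftAct g) hval, Measure.map_map hval (hact g).measurable]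
    rfl

end Forward

/-- a countable infinite residually finite group is amenable iff every
Toeplitz G-subshift admits a G-invariant Borel probability measure. -/
theorem stmt_18 {G : Type*} [Group G] [Countable G] [Infinite G]
    (hrf : ∀ g : G, g ≠ 1 → ∃ N : Subgroup G, N.Normal ∧ N.FiniteIndex ∧ g ∉ N) :
    HasInvariantMeasuresAll G ↔
    ∀ (m : ℕ) (x : G → Fin (m + 2)), IsToeplitz x →
      ∃ μ : Measure (G → Fin (m + 2)), IsProbabilityMeasure μ ∧
        μ (orbitClosure x) = 1 ∧ ∀ g : G, Measure.map (shiftAct g) μ = μ := by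
  refine ⟨fun hG m x _ ↦ hG.exists_measure_orbitClosure x, fun hT X _ _ _ _ _ act hcont _ hmul ↦ ?_⟩
  have : ResiduallyFinite G :=
    residuallyFinite_iff_exists_finiteIndex.2 fun g hg ↦ (hrf g hg).imp fun _ h ↦ h.2
  by_contra hact
  obtain ⟨S, s, F, M, hM, hF⟩ := exists_bounded_one_le_divergence hcont hmul hact
  obtain ⟨E, hE, hEM, hdivE⟩ := exists_isToeplitz_le_divergence s hM hF one_half_lt_one
  obtain ⟨m, x, d, hx, hdivx⟩ :=
    hE.exists_fin_le_divergence hEM hdivE (c' := 1 / 4) (by norm_num)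
  obtain ⟨μ, _, hμx, hμ⟩ := hT m x hx
  have := nonpos_of_le_divergence continuous_of_discreteTopology hdivx hμx hμ
  norm_num at this
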